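/- Let k be an algebraically closed field of characteristic 2, a ∈ k, a ≠ 0, a^7 ≠ 1, and let A = k[t,x,y]/(y^2 + y + t x^4 + (t+a^4)^7). Suppose σ is a k-algebra automorphism of A of the form t ↦ c1 t, x ↦ d1(t) x + d2(t), y ↦ e1(t,x) y + e2(t,x) with c1 ≠ 0, d1(t) ≢ 0, e1(t,x) ≢ 0. Then c1 = 1, d1 = 1, d2 = 0, e1 = 1, and e2 ∈ {0, 1}; i.e., the group of such automorphisms is Z/2Z, generated by y ↦ y + 1. -/

import Mathlib

section

open MvPolynomial

/-- The coordinate ring `A = k[t,x,y]/(y² + y + tx⁴ + (t+a⁴)⁷)` of the affine model of a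
supersingular Enriques surface of type `E₇+A₁`, with `t = X 0`, `x = X 1`, `y = X 2`. -/
noncomputable abbrev E7A1Ring (k : Type*) [Field k] (a : k) :=
  MvPolynomial (Fin 3) k ⧸ Ideal.span
    {(X 2 : MvPolynomial (Fin 3) k) ^ 2 + X 2 + X 0 * X 1 ^ 4 + (X 0 + C (a ^ 4)) ^ 7}

end

namespace E7A1aux

open Polynomial in
theorem coeff_sq {R : Type*} [CommRing R] [CharP R 2] (p : R[X]) (n : ℕ) :
    (p ^ 2).coeff n = if 2 ∣ n then (p.coeff (n / 2)) ^ 2 else 0 := by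
  have : Fact (Nat.Prime 2) := ⟨Nat.prime_two⟩
  rw [← Polynomial.map_frobenius_expand (p := 2) (f := p)]
  rw [Polynomial.coeff_map, Polynomial.coeff_expand (by norm_num)]
  split_ifs <;> simp [frobenius_def]

open Polynomial in
theorem deg_bd {R : Type*} [CommRing R] [IsDomain R] [CharP R 2] (s g : R[X]) (m : ℕ)
    (h : s ^ 2 + s = g) (hg : g.natDegree ≤ 2 * m + 1) : s.natDegree ≤ m := by
  by_contra hlt
  push Not at hlt
  have h1 : g.coeff (2 * s.natDegree) = 0 := coeff_eq_zero_of_natDegree_lt (by omega)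
  have h2 : s.coeff (2 * s.natDegree) = 0 := coeff_eq_zero_of_natDegree_lt (by omega)
  rw [← h, coeff_add, coeff_sq, h2] at h1
  simp at h1
  subst h1
  simp at hlt

open Polynomial in
theorem one_var {k : Type*} [Field k] [CharP k 2] (a : k) (ha : a ≠ 0) (ha7 : a ^ 7 ≠ 1)
    (c : k) (hc : c ≠ 0) (d s : k[X])
    (h : s ^ 2 + s = C c * X * d ^ 4 + (X + C (a ^ 4)) ^ 7 + (C c * X + C (a ^ 4)) ^ 7) :
    c = 1 ∧ d = 0 ∧ (s = 0 ∨ s = 1) := by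
  have two : (2 : k) = 0 := CharTwo.two_eq_zero
  have twoP : (2 : k[X]) = 0 := CharTwo.two_eq_zero
  have frob4 : ∀ x y : k, (x + y) ^ 4 = x ^ 4 + y ^ 4 := fun x y => by
    linear_combination (2 * x ^ 3 * y + 3 * x ^ 2 * y ^ 2 + 2 * x * y ^ 3) * two
  have c4 : ∀ n, (d ^ 4).coeff (4 * n) = d.coeff n ^ 4 := fun n => by
    rw [show d ^ 4 = (d ^ 2) ^ 2 by ring, coeff_sq, if_pos (by omega),
      show 4 * n / 2 = 2 * n by omega, coeff_sq, if_pos (by omega)]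
    simp; ring
  have g7 : ∀ e : k, ((C e * X + C (a ^ 4)) ^ 7 : k[X]).natDegree ≤ 7 := fun e => by
    compute_degree
  have g7' : ((X + C (a ^ 4)) ^ 7 : k[X]).natDegree ≤ 7 := by compute_degree
  -- degree of d
  have hd : d.natDegree ≤ 1 := by
    by_contra hlt
    push Not at hlt
    have hs : s.natDegree ≤ 2 * d.natDegree := by
      refine deg_bd s _ _ h ?_
      have hA : (C c * X * d ^ 4).natDegree ≤ 1 + 4 * d.natDegree := by
        refine natDegree_mul_le.trans (add_le_add ?_ natDegree_pow_le)
        compute_degree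
      refine (natDegree_add_le _ _).trans (max_le ((natDegree_add_le _ _).trans (max_le ?_ ?_)) ?_)
      · omega
      · omega
      · exact (g7 c).trans (by omega)
    have := congrArg (fun q => q.coeff (4 * d.natDegree + 1)) h
    simp only [coeff_add] at this
    rw [coeff_sq, if_neg (by omega),
      coeff_eq_zero_of_natDegree_lt (p := s) (by omega),
      coeff_eq_zero_of_natDegree_lt (lt_of_le_of_lt g7' (by omega)),
      coeff_eq_zero_of_natDegree_lt (lt_of_le_of_lt (g7 c) (by omega)),
      mul_assoc, coeff_C_mul, coeff_X_mul, c4] at this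
    simp [hc] at this
    subst this
    simp at hlt
  obtain ⟨p, q, rfl⟩ : ∃ p q : k, d = C p * X + C q :=
    ⟨_, _, eq_X_add_C_of_natDegree_le_one hd⟩
  set b := a ^ 4 with hb
  have hg : C c * X * (C p * X + C q) ^ 4 + (X + C b) ^ 7 + (C c * X + C b) ^ 7
     = C (1 + c ^ 7) * X ^ 7 + C ((1 + c ^ 6) * b) * X ^ 6
      + C (c * p ^ 4 + (1 + c ^ 5) * b ^ 2) * X ^ 5 + C ((1 + c ^ 4) * b ^ 3) * X ^ 4
      + C ((1 + c ^ 3) * b ^ 4) * X ^ 3 + C ((1 + c ^ 2) * b ^ 5) * X ^ 2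
      + C (c * q ^ 4 + (1 + c) * b ^ 6) * X ^ 1 := by
    have e4 : (C p * X + C q) ^ 4 = C p ^ 4 * X ^ 4 + C q ^ 4 := by
      linear_combination (2 * (C p * X) ^ 3 * C q + 3 * (C p * X) ^ 2 * C q ^ 2
        + 2 * (C p * X) * C q ^ 3) * twoP
    have e7 : ∀ u v : k[X], (u + v) ^ 7 = u ^ 7 + u ^ 6 * v + u ^ 5 * v ^ 2 + u ^ 4 * v ^ 3
        + u ^ 3 * v ^ 4 + u ^ 2 * v ^ 5 + u * v ^ 6 + v ^ 7 := fun u v => by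
      linear_combination (3 * u ^ 6 * v + 10 * u ^ 5 * v ^ 2 + 17 * u ^ 4 * v ^ 3
        + 17 * u ^ 3 * v ^ 4 + 10 * u ^ 2 * v ^ 5 + 3 * u * v ^ 6) * twoP
    rw [e4, e7, e7]
    simp only [C_add, C_mul, C_pow, C_1]
    linear_combination (C b ^ 7) * twoP
  rw [hg] at h
  have hs : s.natDegree ≤ 3 := by
    refine deg_bd s _ _ h ?_
    compute_degree
  have s4 : s.coeff 4 = 0 := coeff_eq_zero_of_natDegree_lt (by omega)
  have s5 : s.coeff 5 = 0 := coeff_eq_zero_of_natDegree_lt (by omega)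
  have s6 : s.coeff 6 = 0 := coeff_eq_zero_of_natDegree_lt (by omega)
  have s7 : s.coeff 7 = 0 := coeff_eq_zero_of_natDegree_lt (by omega)
  have key : ∀ n, (s ^ 2).coeff n + s.coeff n = _ := fun n => by
    rw [← coeff_add, h]
  simp only [coeff_sq s, coeff_add, coeff_C_mul, coeff_X_pow] at key
  have k0 := key 0
  have k1 := key 1
  have k2 := key 2
  have k3 := key 3
  have k4 := key 4
  have k5 := key 5
  have k6 := key 6
  have k7 := key 7
  norm_num [s4, s5, s6, s7] at k0 k1 k2 k3 k4 k5 k6 k7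
  have hc7 : c ^ 7 = 1 := by linear_combination -k7 - two
  have hb7 : b ^ 7 ≠ 1 := by
    intro hh
    apply ha7
    have : (a ^ 7 + 1) ^ 4 = 0 := by
      rw [frob4]; linear_combination hh + two
    have := pow_eq_zero_iff (by norm_num) |>.1 this
    linear_combination this - two
  have hb0 : b ≠ 0 := pow_ne_zero _ ha
  have hc6 : c ^ 6 = 1 := by
    have : (1 + c ^ 6) * (b * (b ^ 7 + 1)) = 0 := by
      rw [k3] at k6
      linear_combination k6 + (1 + c ^ 6) * b * two - c ^ 3 * b ^ 8 * two
    rcases mul_eq_zero.1 this with h' | h'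
    · linear_combination h' - two
    · rcases mul_eq_zero.1 h' with h' | h'
      · exact absurd h' hb0
      · exact absurd (by linear_combination h' - two) hb7
  have hc1 : c = 1 := by linear_combination hc7 - c * hc6
  subst hc1
  have oo : (1 + 1 : k) = 0 := by linear_combination two
  simp [oo] at k0 k1 k2 k3 k4 k5 k6
  simp [k4] at k2
  simp [k2] at k1
  have q0 : q = 0 := by simpa using k1.symm
  have p0 : p = 0 := by simpa using k5.symm
  refine ⟨rfl, by simp [q0, p0], ?_⟩
  have hs' : s = C (s.coeff 0) := by
    ext n
    rcases n with _ | _ | _ | _ | n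
    · simp
    · simp [k2]
    · simp [k4]
    · simp [k3]
    · rw [coeff_eq_zero_of_natDegree_lt (by omega)]; simp
  have : s.coeff 0 * (s.coeff 0 + 1) = 0 := by linear_combination k0
  rcases mul_eq_zero.1 this with h' | h'
  · left; rw [hs', h', C_0]
  · right; rw [hs', show s.coeff 0 = 1 by linear_combination h' - two, C_1]

open Polynomial in
theorem two_var {k : Type*} [Field k] [CharP k 2] (a : k) (ha : a ≠ 0) (ha7 : a ^ 7 ≠ 1)
    (c : k) (hc : c ≠ 0) (d1 d2 : k[X]) (E : k[X][X])
    (h : E ^ 2 + E = C X * X ^ 4 + (C X + C (C (a ^ 4))) ^ 7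
      + C (C c) * C X * (C d1 * X + C d2) ^ 4 + (C (C c) * C X + C (C (a ^ 4))) ^ 7) :
    c = 1 ∧ d1 ^ 4 = 1 ∧ d2 = 0 ∧ (E = 0 ∨ E = 1) := by
  have twoP : (2 : k[X]) = 0 := CharTwo.two_eq_zero
  have twoPP : (2 : k[X][X]) = 0 := CharTwo.two_eq_zero
  have hg : C X * X ^ 4 + (C X + C (C (a ^ 4))) ^ 7
      + C (C c) * C X * (C d1 * X + C d2) ^ 4 + (C (C c) * C X + C (C (a ^ 4))) ^ 7
      = C (X * (1 + C c * d1 ^ 4)) * X ^ 4 + (C (C c * X * d2 ^ 4 + (X + C (a ^ 4)) ^ 7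
        + (C c * X + C (a ^ 4)) ^ 7) : k[X][X]) := by
    have e4 : (C d1 * X + C d2 : k[X][X]) ^ 4 = C d1 ^ 4 * X ^ 4 + C d2 ^ 4 := by
      linear_combination (2 * (C d1 * X) ^ 3 * C d2 + 3 * (C d1 * X) ^ 2 * C d2 ^ 2
        + 2 * (C d1 * X) * C d2 ^ 3) * twoPP
    rw [e4]
    simp only [C_add, C_mul, C_pow, C_1]
    ring
  rw [hg] at h
  have hs : E.natDegree ≤ 2 := by
    refine deg_bd E _ _ h ?_
    compute_degree
    norm_num
  have s4 : E.coeff 4 = 0 := coeff_eq_zero_of_natDegree_lt (by omega)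
  have key : ∀ n, (E ^ 2).coeff n + E.coeff n = _ := fun n => by
    rw [← coeff_add, h]
  simp only [coeff_sq E, coeff_add, coeff_C_mul, coeff_X_pow, coeff_C] at key
  have k0 := key 0
  have k2 := key 2
  have k4 := key 4
  clear key
  norm_num [s4] at k0 k2 k4
  have hw : 1 + C c * d1 ^ 4 = 0 := by
    have := congrArg derivative k4
    simp only [derivative_pow, derivative_mul, derivative_X, derivative_add, derivative_C,
      derivative_one] at this
    push_cast at this
    simp only [map_ofNat] at this
    linear_combination (E.coeff 2 * derivative (E.coeff 2)
      - 2 * X * C c * d1 ^ 3 * derivative d1) * twoP - this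
  rw [hw] at k4
  simp at k4
  rw [k4] at k2
  simp at k2
  obtain ⟨h1, h2, h3⟩ := one_var a ha ha7 c hc d2 (E.coeff 0) (by rw [k0]; simp)
  subst h1
  have hE : E = C (E.coeff 0) := by
    ext1 n
    rcases n with _ | _ | _ | n
    · simp
    · simp [k2]
    · simp [k4]
    · rw [coeff_eq_zero_of_natDegree_lt (by omega)]; simp
  refine ⟨rfl, ?_, h2, ?_⟩
  · simp only [C_1] at hw
    linear_combination hw - twoP
  · rcases h3 with h3 | h3 <;> rw [h3] at hE
    · left; simpa using hE
    · right; simpa using hE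

open Polynomial in
theorem basis {R : Type*} [CommRing R] [IsDomain R] (F P Q : R)
    (h : AdjoinRoot.of (X ^ 2 + X + C F) P
      + AdjoinRoot.of (X ^ 2 + X + C F) Q * AdjoinRoot.root (X ^ 2 + X + C F) = 0) :
    P = 0 ∧ Q = 0 := by
  have hm : (X ^ 2 + X + C F).Monic := by monicity!
  have hd : (X ^ 2 + X + C F).natDegree = 2 := by compute_degree!
  have : AdjoinRoot.mk (X ^ 2 + X + C F) (C Q * X + C P) = 0 := by
    rw [← h]; simp; ring
  rw [AdjoinRoot.mk_eq_zero] at this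
  have h0 := hm.not_dvd_of_natDegree_lt (q := C Q * X + C P)
  have hz : C Q * X + C P = 0 := by
    by_contra hne
    refine h0 hne ?_ this
    rw [hd]
    exact lt_of_le_of_lt natDegree_linear_le (by norm_num)
  constructor
  · simpa using congrArg (fun p => p.coeff 0) hz
  · simpa using congrArg (fun p => p.coeff 1) hz

/-- embed two variable polynomials -/
noncomputable def phi (k : Type*) [Field k] :
    MvPolynomial (Fin 2) k →ₐ[k] Polynomial (Polynomial k) :=
  MvPolynomial.aeval ![Polynomial.C Polynomial.X, Polynomial.X]

theorem phi_inj (k : Type*) [Field k] : Function.Injective (phi k) := by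
  let ψ : Polynomial (Polynomial k) →+* MvPolynomial (Fin 2) k :=
    Polynomial.eval₂RingHom (Polynomial.aeval (MvPolynomial.X 0 : MvPolynomial (Fin 2) k)).toRingHom (MvPolynomial.X 1)
  have : ∀ p, ψ (phi k p) = p := by
    intro p
    have : ψ.comp (phi k).toRingHom = RingHom.id _ := by
      apply MvPolynomial.ringHom_ext
      · intro r
        simp [ψ, phi, MvPolynomial.algebraMap_eq]
      · intro i
        fin_cases i <;> simp [ψ, phi]
    exact RingHom.congr_fun this p
  exact Function.LeftInverse.injective this

end E7A1aux

open MvPolynomial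

/-- Any `k`-algebra automorphism of `A = k[t,x,y]/(y² + y + tx⁴ + (t+a⁴)⁷)` (with
`a ≠ 0`, `a⁷ ≠ 1`) of the form `t ↦ c₁t`, `x ↦ d₁(t)x + d₂(t)`, `y ↦ e₁(t,x)y + e₂(t,x)`
with `c₁ ≠ 0`, `d₁ ≢ 0`, `e₁ ≢ 0` satisfies `c₁ = 1`, `d₁ = 1`, `d₂ = 0`, `e₁ = 1` and
`e₂ ∈ {0, 1}`: the group of such automorphisms is `ℤ/2ℤ`, generated by `y ↦ y + 1`. -/
theorem E7A1_supersingular_aut (k : Type*) [Field k] [IsAlgClosed k] [CharP k 2]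
    (a : k) (ha : a ≠ 0) (ha7 : a ^ 7 ≠ 1)
    (c1 : k) (d1 d2 : Polynomial k) (e1 e2 : MvPolynomial (Fin 2) k)
    (hc1 : c1 ≠ 0) (hd1 : d1 ≠ 0) (he1 : e1 ≠ 0)
    (σ : E7A1Ring k a ≃ₐ[k] E7A1Ring k a)
    (T : E7A1Ring k a) (Xx : E7A1Ring k a) (Yy : E7A1Ring k a)
    (hT : T = Ideal.Quotient.mk _ (X 0))
    (hX : Xx = Ideal.Quotient.mk _ (X 1))
    (hY : Yy = Ideal.Quotient.mk _ (X 2))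
    (hσt : σ T = algebraMap k (E7A1Ring k a) c1 * T)
    (hσx : σ Xx = Polynomial.aeval T d1 * Xx + Polynomial.aeval T d2)
    (hσy : σ Yy = MvPolynomial.aeval ![T, Xx] e1 * Yy + MvPolynomial.aeval ![T, Xx] e2) :
    c1 = 1 ∧ d1 = 1 ∧ d2 = 0 ∧ e1 = 1 ∧ (e2 = 0 ∨ e2 = 1) := by
  have hrel : Yy ^ 2 + Yy + T * Xx ^ 4 + (T + algebraMap k _ (a ^ 4)) ^ 7 = 0 := by
    rw [hT, hX, hY]
    exact Ideal.Quotient.eq_zero_iff_mem.2 (Ideal.subset_span rfl)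
  have h2 := congrArg σ hrel
  simp only [map_add, map_mul, map_pow, map_zero, hσt, hσx, hσy, AlgEquiv.commutes] at h2
  let F : Polynomial (Polynomial k) := Polynomial.C Polynomial.X * Polynomial.X ^ 4
    + (Polynomial.C Polynomial.X + Polynomial.C (Polynomial.C (a ^ 4))) ^ 7
  let f : Polynomial (Polynomial (Polynomial k)) :=
    Polynomial.X ^ 2 + Polynomial.X + Polynomial.C F
  let ι : Polynomial (Polynomial k) →ₐ[k] AdjoinRoot f :=
    { AdjoinRoot.of f with commutes' := fun r => rfl }
  have hroot : (AdjoinRoot.root f) ^ 2 + AdjoinRoot.root f + ι F = 0 := by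
    have := AdjoinRoot.eval₂_root f
    change _ + _ + AdjoinRoot.of f F = 0
    simpa [f] using this
  have hιC : ∀ r : k, ι (Polynomial.C (Polynomial.C r)) = algebraMap k _ r := fun r => rfl
  let g0 : MvPolynomial (Fin 3) k →ₐ[k] AdjoinRoot f :=
    MvPolynomial.aeval ![ι (Polynomial.C Polynomial.X), ι Polynomial.X, AdjoinRoot.root f]
  let g : E7A1Ring k a →ₐ[k] AdjoinRoot f := Ideal.Quotient.liftₐ _ g0 (by
    intro p hp
    have : Ideal.span {(X 2 : MvPolynomial (Fin 3) k) ^ 2 + X 2 + X 0 * X 1 ^ 4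
        + (X 0 + C (a ^ 4)) ^ 7} ≤ RingHom.ker g0 := by
      rw [Ideal.span_le, Set.singleton_subset_iff]
      change g0 _ = 0
      rw [← hroot]
      simp only [g0, F, map_add, map_mul, map_pow, MvPolynomial.aeval_X, MvPolynomial.aeval_C, hιC]
      simp
      ring
    exact this hp)
  have gT : g T = ι (Polynomial.C Polynomial.X) := by
    rw [hT]; change g0 (X 0) = _; simp [g0]
  have gX : g Xx = ι Polynomial.X := by
    rw [hX]; change g0 (X 1) = _; simp [g0]
  have gY : g Yy = AdjoinRoot.root f := by
    rw [hY]; change g0 (X 2) = _; simp [g0]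
  have gd : ∀ d : Polynomial k, g (Polynomial.aeval T d) = ι (Polynomial.C d) := by
    intro d
    rw [← Polynomial.aeval_algHom_apply, gT, Polynomial.aeval_algHom_apply]
    congr 1
    have := Polynomial.aeval_algHom_apply (Polynomial.CAlgHom (R := k) (A := Polynomial k))
      Polynomial.X d
    simpa using this
  have ge : ∀ e : MvPolynomial (Fin 2) k,
      g (MvPolynomial.aeval ![T, Xx] e) = ι (E7A1aux.phi k e) := by
    intro e
    have : g.comp (MvPolynomial.aeval ![T, Xx]) = ι.comp (E7A1aux.phi k) := by
      apply MvPolynomial.algHom_ext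
      intro i
      fin_cases i <;> simp [E7A1aux.phi, gT, gX]
    exact AlgHom.congr_fun this e
  have h3 := congrArg g h2
  simp only [map_add, map_mul, map_pow, map_zero, gd, ge, gT, gX, gY, AlgHom.commutes] at h3
  set E1 := E7A1aux.phi k e1 with hE1
  set E2 := E7A1aux.phi k e2 with hE2
  have twoPP : (2 : Polynomial (Polynomial k)) = 0 := CharTwo.two_eq_zero
  have h4 := E7A1aux.basis F (- E1 ^ 2 * F + E2 ^ 2 + E2
      + Polynomial.C (Polynomial.C c1) * Polynomial.C Polynomial.X
        * (Polynomial.C d1 * Polynomial.X + Polynomial.C d2) ^ 4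
      + (Polynomial.C (Polynomial.C c1) * Polynomial.C Polynomial.X
        + Polynomial.C (Polynomial.C (a ^ 4))) ^ 7) (- E1 ^ 2 + E1 + 2 * E1 * E2) (by
    change ι _ + ι _ * AdjoinRoot.root f = 0
    simp only [map_add, map_mul, map_pow, map_neg, hιC, map_ofNat] at h3 ⊢
    linear_combination h3 - (ι E1) ^ 2 * hroot)
  obtain ⟨h5, h6⟩ := h4
  have hE1' : E1 ≠ 0 := by
    intro h0
    exact he1 (E7A1aux.phi_inj k (by rw [← hE1, h0, map_zero]))
  have hE11 : E1 = 1 := by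
    have : E1 * (E1 - 1) = 0 := by linear_combination -h6 + E1 * E2 * twoPP
    rcases mul_eq_zero.1 this with h | h
    · exact absurd h hE1'
    · exact sub_eq_zero.1 h
  rw [hE11] at h5
  obtain ⟨r1, r2, r3, r4⟩ := E7A1aux.two_var a ha ha7 c1 hc1 d1 d2 E2 (by
    linear_combination h5 - (Polynomial.C (Polynomial.C c1) * Polynomial.C Polynomial.X
        * (Polynomial.C d1 * Polynomial.X + Polynomial.C d2) ^ 4
      + (Polynomial.C (Polynomial.C c1) * Polynomial.C Polynomial.X
        + Polynomial.C (Polynomial.C (a ^ 4))) ^ 7) * twoPP)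
  refine ⟨r1, ?_, r3, E7A1aux.phi_inj k (by rw [← hE1, hE11, map_one]), ?_⟩
  · have twoP : (2 : Polynomial k) = 0 := CharTwo.two_eq_zero
    have : (d1 - 1) ^ 4 = 0 := by
      linear_combination r2 + (-2 * d1 ^ 3 + 3 * d1 ^ 2 - 2 * d1 + 1) * twoP
    exact sub_eq_zero.1 (pow_eq_zero_iff (by norm_num) |>.1 this)
  · rcases r4 with r | r
    · left; exact E7A1aux.phi_inj k (by rw [← hE2, r, map_zero])
    · right; exact E7A1aux.phi_inj k (by rw [← hE2, r, map_one])
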